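/- Fix ε > 0 and n ≥ 1. Let L : ℝ^n × ℝ^n × ℝ → ℝ be continuously differentiable and x : ℝ → ℝ^n continuous. Set G(t) = ∂₁L(x(t), d⁻_ε x(t), t) and F(t) = ∂₂L(x(t), d⁻_ε x(t), t). Then the following are equivalent: (i) for every h ∈ C_c^∞(ℝ, ℝ^n), ∫_ℝ [G(t)·h(t) + F(t)·d⁺_ε h(t)] dt = 0; (ii) for every t ∈ ℝ, G(t) = d⁻_ε F(t). (This is the Euler–Lagrange equation causal in the direction future → past, obtained from variations evolving in the direction past → future.) -/

import Mathlib

open MeasureTheory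
open scoped RealInnerProductSpace

noncomputable section

/-- Backward (left) finite difference: `d⁺_ε f t = (f t − f (t − ε)) / ε`. -/
def backwardDiff {n : ℕ} (ε : ℝ) (f : ℝ → EuclideanSpace ℝ (Fin n)) (t : ℝ) :
    EuclideanSpace ℝ (Fin n) :=
  ε⁻¹ • (f t - f (t - ε))

/-- Forward (right) finite difference: `d⁻_ε f t = (f (t + ε) − f t) / ε`. -/
def forwardDiff {n : ℕ} (ε : ℝ) (f : ℝ → EuclideanSpace ℝ (Fin n)) (t : ℝ) :
    EuclideanSpace ℝ (Fin n) :=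
  ε⁻¹ • (f (t + ε) - f t)

/-- `∂₁L(x,v,t)`: gradient of `L` with respect to its first `ℝ^n` argument. -/
def grad1 {n : ℕ} (L : EuclideanSpace ℝ (Fin n) × EuclideanSpace ℝ (Fin n) × ℝ → ℝ)
    (x v : EuclideanSpace ℝ (Fin n)) (t : ℝ) : EuclideanSpace ℝ (Fin n) :=
  gradient (fun y => L (y, v, t)) x

/-- `∂₂L(x,v,t)`: gradient of `L` with respect to its second `ℝ^n` argument. -/
def grad2 {n : ℕ} (L : EuclideanSpace ℝ (Fin n) × EuclideanSpace ℝ (Fin n) × ℝ → ℝ)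
    (x v : EuclideanSpace ℝ (Fin n)) (t : ℝ) : EuclideanSpace ℝ (Fin n) :=
  gradient (fun w => L (x, w, t)) v

/-!
By translation invariance of Lebesgue measure, the adjoint of the backward difference `d⁺_ε` is
`-d⁻_ε`, where `d⁻_ε` is the forward difference. Hence the integral in the variational condition
equals `∫ ⟪G - d⁻_ε F, h⟫`. As `G` and `F` are continuous, the fundamental lemma of the calculus
of variations shows that it vanishes for all test functions `h` exactly when `G = d⁻_ε F`.
-/

open scoped ContDiff Gradient

section PartialGradient

variable {𝕜 P E : Type*} [RCLike 𝕜] [NormedAddCommGroup P] [NormedSpace 𝕜 P]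
  [NormedAddCommGroup E] [InnerProductSpace 𝕜 E] [CompleteSpace E]

theorem continuous_gradient_of_contDiff_uncurry {f : P → E → 𝕜} {g : P → E}
    (hf : ContDiff 𝕜 1 (Function.uncurry f)) (hg : Continuous g) :
    Continuous fun p => ∇ (f p) (g p) :=
  (InnerProductSpace.toDual 𝕜 E).symm.continuous.comp (Continuous.fderiv_one hf hg)

end PartialGradient

section SummationByParts

variable {A E : Type*} [MeasurableSpace A] {μ : Measure A}
  [NormedAddCommGroup E] [InnerProductSpace ℝ E]

theorem integral_inner_comp_sub_right [AddGroup A] [MeasurableAdd A] [μ.IsAddRightInvariant]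
    (F h : A → E) (a : A) :
    ∫ t, ⟪F t, h (t - a)⟫ ∂μ = ∫ t, ⟪F (t + a), h t⟫ ∂μ := by
  simpa only [add_sub_cancel_right] using
    (integral_add_right_eq_self (μ := μ) (fun t => ⟪F t, h (t - a)⟫) a).symm

variable [TopologicalSpace A] [IsFiniteMeasureOnCompacts μ] {F G h : A → E}

theorem integrable_inner_of_hasCompactSupport [OpensMeasurableSpace A] (hF : Continuous F)
    (hh : Continuous h) (hsupp : HasCompactSupport h) : Integrable (fun t => ⟪F t, h t⟫) μ :=
  (hF.inner hh).integrable_of_hasCompactSupport <|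
    hsupp.mono fun t => mt fun ht : h t = 0 => by simp only [ht, inner_zero_right]

variable [AddGroup A] [IsTopologicalAddGroup A]

theorem integrable_inner_comp_sub_right [OpensMeasurableSpace A] (hF : Continuous F)
    (hh : Continuous h) (hsupp : HasCompactSupport h) (a : A) :
    Integrable (fun t => ⟪F t, h (t - a)⟫) μ :=
  integrable_inner_of_hasCompactSupport hF (by fun_prop)
    (hsupp.comp_homeomorph (Homeomorph.subRight a))

variable [BorelSpace A] [μ.IsAddRightInvariant]

theorem integral_inner_sub_comp_sub_right (hF : Continuous F) (hh : Continuous h)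
    (hsupp : HasCompactSupport h) (a : A) :
    ∫ t, ⟪F t, h t - h (t - a)⟫ ∂μ = -∫ t, ⟪F (t + a) - F t, h t⟫ ∂μ := by
  have hFh : Integrable (fun t => ⟪F t, h t⟫) μ :=
    integrable_inner_of_hasCompactSupport hF hh hsupp
  have hFh_add : Integrable (fun t => ⟪F (t + a), h t⟫) μ :=
    integrable_inner_of_hasCompactSupport (by fun_prop) hh hsupp
  simp only [inner_sub_left, inner_sub_right]
  rw [integral_sub hFh (integrable_inner_comp_sub_right hF hh hsupp a), integral_sub hFh_add hFh,
    integral_inner_comp_sub_right, neg_sub]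

theorem integral_inner_add_inner_smul_sub (hG : Continuous G) (hF : Continuous F)
    (hh : Continuous h) (hsupp : HasCompactSupport h) (c : ℝ) (a : A) :
    ∫ t, (⟪G t, h t⟫ + ⟪F t, c • (h t - h (t - a))⟫) ∂μ =
      ∫ t, ⟪G t - c • (F (t + a) - F t), h t⟫ ∂μ := by
  have hGh : Integrable (fun t => ⟪G t, h t⟫) μ :=
    integrable_inner_of_hasCompactSupport hG hh hsupp
  have hbackward : Integrable (fun t => ⟪F t, h t - h (t - a)⟫) μ := by
    simp only [inner_sub_right]
    exact (integrable_inner_of_hasCompactSupport hF hh hsupp).sub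
      (integrable_inner_comp_sub_right hF hh hsupp a)
  have hforward : Integrable (fun t => ⟪F (t + a) - F t, h t⟫) μ :=
    integrable_inner_of_hasCompactSupport (by fun_prop) hh hsupp
  simp only [inner_sub_left (G _), real_inner_smul_left, real_inner_smul_right]
  rw [integral_add hGh (hbackward.const_mul c), integral_sub hGh (hforward.const_mul c),
    integral_const_mul, integral_const_mul, integral_inner_sub_comp_sub_right hF hh hsupp,
    mul_neg, sub_eq_add_neg]

end SummationByParts

section FundamentalLemma

variable {V E : Type*} [NormedAddCommGroup V] [NormedSpace ℝ V] [FiniteDimensional ℝ V]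
  [MeasurableSpace V] [BorelSpace V] {μ : Measure V} [IsLocallyFiniteMeasure μ]
  [μ.IsOpenPosMeasure] [NormedAddCommGroup E] [InnerProductSpace ℝ E]

theorem forall_integral_inner_contDiff_eq_zero_iff {K : V → E} (hK : Continuous K) :
    (∀ h : V → E, ContDiff ℝ ∞ h → HasCompactSupport h → ∫ t, ⟪K t, h t⟫ ∂μ = 0) ↔ K = 0 := by
  refine ⟨fun hint => funext fun t => ext_inner_right ℝ fun v => ?_, fun hK_zero h _ _ => ?_⟩
  · have hKv : Continuous fun s => ⟪K s, v⟫ := hK.inner continuous_const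
    have hKv_ae : ∀ᵐ s ∂μ, ⟪K s, v⟫ = 0 :=
      ae_eq_zero_of_integral_contDiff_smul_eq_zero hKv.locallyIntegrable fun g hg hgsupp => by
        simpa only [real_inner_smul_right, smul_eq_mul] using
          hint (fun s => g s • v) (hg.smul contDiff_const) hgsupp.smul_right
    rw [Pi.zero_apply, inner_zero_left]
    exact congrFun ((hKv.ae_eq_iff_eq μ continuous_const).1 hKv_ae) t
  · simp only [hK_zero, Pi.zero_apply, inner_zero_left, integral_zero]

end FundamentalLemma

section EulerLagrange

variable {E : Type*} [NormedAddCommGroup E] [InnerProductSpace ℝ E]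

theorem forall_integral_inner_add_inner_smul_sub_eq_zero_iff {V : Type*}
    [NormedAddCommGroup V] [NormedSpace ℝ V] [FiniteDimensional ℝ V] [MeasurableSpace V]
    [BorelSpace V] {μ : Measure V} [μ.IsAddHaarMeasure] {G F : V → E} (hG : Continuous G)
    (hF : Continuous F) (c : ℝ) (a : V) :
    (∀ h : V → E, ContDiff ℝ ∞ h → HasCompactSupport h →
        ∫ t, (⟪G t, h t⟫ + ⟪F t, c • (h t - h (t - a))⟫) ∂μ = 0) ↔
      ∀ t, G t = c • (F (t + a) - F t) := by
  have hK : Continuous fun t => G t - c • (F (t + a) - F t) := by fun_prop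
  calc
    _ ↔ ∀ h : V → E, ContDiff ℝ ∞ h → HasCompactSupport h →
        ∫ t, ⟪G t - c • (F (t + a) - F t), h t⟫ ∂μ = 0 :=
      forall₃_congr fun h hh hsupp => by
        rw [integral_inner_add_inner_smul_sub hG hF hh.continuous hsupp]
    _ ↔ (fun t => G t - c • (F (t + a) - F t)) = 0 :=
      forall_integral_inner_contDiff_eq_zero_iff hK
    _ ↔ _ := by simp only [funext_iff, Pi.zero_apply, sub_eq_zero]

theorem causal_euler_lagrange_backward_general [CompleteSpace E] {ε : ℝ} (_hε : ε ≠ 0)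
    {L : E × E × ℝ → ℝ} (hL : ContDiff ℝ 1 L) {x : ℝ → E} (hx : Continuous x) {G F : ℝ → E}
    (hG : G = fun t => ∇ (fun y => L (y, ε⁻¹ • (x (t + ε) - x t), t)) (x t))
    (hF : F = fun t => ∇ (fun w => L (x t, w, t)) (ε⁻¹ • (x (t + ε) - x t))) :
    (∀ h : ℝ → E, ContDiff ℝ ∞ h → HasCompactSupport h →
        ∫ t, (⟪G t, h t⟫ + ⟪F t, ε⁻¹ • (h t - h (t - ε))⟫) = 0) ↔
      ∀ t, G t = ε⁻¹ • (F (t + ε) - F t) := by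
  have hpath : Continuous fun t => (x t, ε⁻¹ • (x (t + ε) - x t), t) := by fun_prop
  have hgrad_left : Continuous fun p : E × E × ℝ => ∇ (fun y => L (y, p.2.1, p.2.2)) p.1 :=
    continuous_gradient_of_contDiff_uncurry (by fun_prop) continuous_fst
  have hgrad_right : Continuous fun p : E × E × ℝ => ∇ (fun w => L (p.1, w, p.2.2)) p.2.1 :=
    continuous_gradient_of_contDiff_uncurry (by fun_prop) (by fun_prop)
  have hG_cont : Continuous G := hG ▸ hgrad_left.comp hpath
  have hF_cont : Continuous F := hF ▸ hgrad_right.comp hpath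
  exact forall_integral_inner_add_inner_smul_sub_eq_zero_iff hG_cont hF_cont ε⁻¹ ε

end EulerLagrange

/-- Euler–Lagrange equation causal in the direction future → past,
obtained from variations evolving in the direction past → future.
With `G = ∂₁L(x, d⁻_ε x, ·)` and `F = ∂₂L(x, d⁻_ε x, ·)`, the trajectory is an
extremal with respect to variations entering via `d⁺_ε h` if and only if
`G = d⁻_ε F` everywhere. -/
theorem causal_euler_lagrange_backward
    (ε : ℝ) (hε : 0 < ε) (n : ℕ) (hn : 1 ≤ n)
    (L : EuclideanSpace ℝ (Fin n) × EuclideanSpace ℝ (Fin n) × ℝ → ℝ)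
    (hL : ContDiff ℝ 1 L)
    (x : ℝ → EuclideanSpace ℝ (Fin n)) (hx : Continuous x)
    (G : ℝ → EuclideanSpace ℝ (Fin n))
    (hG : G = fun t => grad1 L (x t) (forwardDiff ε x t) t)
    (F : ℝ → EuclideanSpace ℝ (Fin n))
    (hF : F = fun t => grad2 L (x t) (forwardDiff ε x t) t) :
    (∀ h : ℝ → EuclideanSpace ℝ (Fin n),
        ContDiff ℝ (⊤ : ℕ∞) h → HasCompactSupport h →
        (∫ t : ℝ, (⟪G t, h t⟫ + ⟪F t, backwardDiff ε h t⟫)) = 0) ↔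
    (∀ t : ℝ, G t = forwardDiff ε F t) := by
  exact causal_euler_lagrange_backward_general hε.ne' hL hx hG hF

end
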